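/- arXiv:2401.03807 — 2 statements merged into one kernel-verified Lean document; each statement's English description precedes it below -/
import Mathlib

section
/- Let m ≥ 1 and q ≥ 2 be integers and σ a real number with 2 ≤ σ ≤ q/√(8·m·ln q). Then Σ_{e,e' ∈ (ℤ/qℤ)^m, e ≠ e'} √(ϑ_{σ,q}(e)) · √(ϑ_{σ,q}(e')) ≤ (q^{m/2} + 1)². -/
open scoped Classical

/-- `ρ_σ(ℤ^m) = Σ_{k ∈ ℤ^m} exp(−π‖k‖²/σ²)`. -/
noncomputable def rhoZm (σ : ℝ) (m : ℕ) : ℝ :=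
  ∑' k : Fin m → ℤ, Real.exp (-Real.pi * (∑ i, ((k i : ℝ)) ^ 2) / σ ^ 2)

/-- Folded discrete Gaussian `ϑ_{σ,q}` on `(ℤ/qℤ)^m`, via the representative
`x̄ ∈ ℤ^m ∩ (−q/2, q/2]^m` of each coordinate (`ZMod.valMinAbs`). -/
noncomputable def thetaM (σ : ℝ) (q m : ℕ) (x : Fin m → ZMod q) : ℝ :=
  (∑' k : Fin m → ℤ,
      Real.exp (-Real.pi * (∑ i, (((x i).valMinAbs : ℝ) + q * k i) ^ 2) / σ ^ 2)) / rhoZm σ m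

/-!
The off-diagonal part of `(∑ √ϑ(e))²` is `(∑ √ϑ(e))² - ∑ ϑ(e)`, which by Cauchy–Schwarz is at most
`(q ^ m - 1) ∑ ϑ(e)`. Every point of `ℤ^m` has a unique expression `x̄ + q k`, so the masses `ϑ(e)`
rearrange the absolutely convergent sum `ρ_σ(ℤ^m)` and add up to `1`.
-/

section OffDiagonal

variable {ι R : Type*} [Fintype ι] [DecidableEq ι] [CommRing R]

lemma sum_sum_ite_ne_mul (a : ι → R) :
    ∑ i, ∑ j, (if i ≠ j then a i * a j else 0) = (∑ i, a i) ^ 2 - ∑ i, a i ^ 2 := by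
  simp only [ite_not, sq, Finset.sum_mul_sum, ← Finset.sum_sub_distrib]
  refine Finset.sum_congr rfl fun i _ ↦ ?_
  rw [eq_sub_iff_add_eq, ← Fintype.sum_ite_eq i fun j ↦ a i * a j, ← Finset.sum_add_distrib]
  exact Finset.sum_congr rfl fun j _ ↦ by split_ifs <;> simp

lemma sum_sum_ite_ne_mul_le [LinearOrder R] [IsStrictOrderedRing R] (a : ι → R) :
    ∑ i, ∑ j, (if i ≠ j then a i * a j else 0) ≤ (Fintype.card ι - 1) * ∑ i, a i ^ 2 := by
  rw [sum_sum_ite_ne_mul, sub_one_mul]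
  exact sub_le_sub_right sq_sum_le_card_mul_sum_sq _

end OffDiagonal

section GaussianSummability

lemma summable_prod_pi_of_nonneg {ι : Type*} [Fintype ι] {κ : ι → Type*} {f : ∀ i, κ i → ℝ}
    (hf : ∀ i, Summable (f i)) (hf₀ : ∀ i x, 0 ≤ f i x) :
    Summable fun k : ∀ i, κ i ↦ ∏ i, f i (k i) := by
  have prod_nonneg (k : ∀ i, κ i) : 0 ≤ ∏ i, f i (k i) :=
    Finset.prod_nonneg fun i _ ↦ hf₀ i (k i)
  refine summable_of_sum_le (c := ∏ i, ∑' x, f i x) prod_nonneg fun s ↦ ?_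
  have subset_box : s ⊆ Fintype.piFinset fun i ↦ s.image (· i) := fun k hk ↦
    Fintype.mem_piFinset.2 fun i ↦ Finset.mem_image_of_mem _ hk
  calc
    ∑ k ∈ s, ∏ i, f i (k i) ≤ ∑ k ∈ Fintype.piFinset fun i ↦ s.image (· i), ∏ i, f i (k i) :=
      Finset.sum_le_sum_of_subset_of_nonneg subset_box fun k _ _ ↦ prod_nonneg k
    _ = ∏ i, ∑ x ∈ s.image (· i), f i x := (Finset.prod_univ_sum _ _).symm
    _ ≤ ∏ i, ∑' x, f i x :=
      Finset.prod_le_prod (fun i _ ↦ Finset.sum_nonneg fun x _ ↦ hf₀ i x) fun i _ ↦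
        (hf i).sum_le_tsum _ fun x _ ↦ hf₀ i x

variable {c : ℝ}

lemma summable_exp_mul_int_sq (hc : c < 0) : Summable fun n : ℤ ↦ Real.exp (c * (n : ℝ) ^ 2) := by
  have summable_nat : Summable fun n : ℕ ↦ Real.exp (c * (n : ℝ) ^ 2) :=
    Real.summable_exp_nat_mul_of_ge hc fun n ↦ mod_cast Nat.le_self_pow two_ne_zero n
  exact .of_nat_of_neg (by simpa using summable_nat) (by simpa using summable_nat)

lemma summable_exp_mul_sum_int_sq {ι : Type*} [Fintype ι] (hc : c < 0) :
    Summable fun k : ι → ℤ ↦ Real.exp (c * ∑ i, (k i : ℝ) ^ 2) := by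
  simp only [Finset.mul_sum, Real.exp_sum]
  exact summable_prod_pi_of_nonneg (f := fun _ (n : ℤ) ↦ Real.exp (c * (n : ℝ) ^ 2))
    (fun _ ↦ summable_exp_mul_int_sq hc) fun _ _ ↦ (Real.exp_pos _).le

end GaussianSummability

section Folding

variable {ι : Type*} {q : ℕ} [NeZero q]

lemma bijective_valMinAbs_add_mul :
    Function.Bijective fun p : (ι → ZMod q) × (ι → ℤ) ↦
      fun i ↦ (p.1 i).valMinAbs + (q : ℤ) * p.2 i := by
  refine ⟨fun ⟨x, k⟩ ⟨y, l⟩ h ↦ ?_, fun n ↦ ?_⟩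
  · have residue_eq : x = y := funext fun i ↦ by
      simpa using congrArg (Int.cast : ℤ → ZMod q) (congrFun h i)
    subst residue_eq
    have quotient_eq : k = l := funext fun i ↦
      mul_left_cancel₀ (mod_cast NeZero.ne q) (add_left_cancel (congrFun h i))
    rw [quotient_eq]
  · have dvd_sub (i : ι) : (q : ℤ) ∣ n i - (n i : ZMod q).valMinAbs := by
      simp [← ZMod.intCast_zmod_eq_zero_iff_dvd]
    choose k hk using dvd_sub
    exact ⟨(fun i ↦ n i, k), funext fun i ↦ by simp [← hk]⟩

lemma sum_tsum_valMinAbs_add_mul [Fintype ι] [DecidableEq ι] {E : Type*} [AddCommGroup E]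
    [UniformSpace E] [IsUniformAddGroup E] [CompleteSpace E] [T0Space E] {f : (ι → ℤ) → E}
    (hf : Summable f) :
    ∑ x : ι → ZMod q, ∑' k : ι → ℤ, f (fun i ↦ (x i).valMinAbs + q * k i) = ∑' n, f n := by
  let e := Equiv.ofBijective _ (bijective_valMinAbs_add_mul (ι := ι) (q := q))
  have summable_fold : Summable fun p ↦ f (e p) := e.summable_iff.2 hf
  rw [← e.tsum_eq f, summable_fold.tsum_prod, tsum_fintype]
  rfl

end Folding

section FoldedGaussian

variable {σ : ℝ} {q m : ℕ}

lemma thetaM_nonneg (x : Fin m → ZMod q) : 0 ≤ thetaM σ q m x :=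
  div_nonneg (tsum_nonneg fun _ ↦ (Real.exp_pos _).le) (tsum_nonneg fun _ ↦ (Real.exp_pos _).le)

lemma summable_exp_neg_pi_mul_sum_sq_div {ι : Type*} [Fintype ι] (hσ : σ ≠ 0) :
    Summable fun k : ι → ℤ ↦ Real.exp (-Real.pi * (∑ i, (k i : ℝ) ^ 2) / σ ^ 2) := by
  have rate_neg : -Real.pi / σ ^ 2 < 0 :=
    div_neg_of_neg_of_pos (neg_neg_of_pos Real.pi_pos) (by positivity)
  simpa only [mul_div_right_comm] using summable_exp_mul_sum_int_sq rate_neg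

lemma rhoZm_pos (hσ : σ ≠ 0) : 0 < rhoZm σ m :=
  (summable_exp_neg_pi_mul_sum_sq_div hσ).tsum_pos (fun _ ↦ (Real.exp_pos _).le) 0 (Real.exp_pos _)

lemma sum_thetaM [NeZero q] (hσ : σ ≠ 0) : ∑ x : Fin m → ZMod q, thetaM σ q m x = 1 := by
  have sum_fold := sum_tsum_valMinAbs_add_mul (q := q)
    (summable_exp_neg_pi_mul_sum_sq_div (ι := Fin m) hσ)
  simp only [Int.cast_add, Int.cast_mul, Int.cast_natCast] at sum_fold
  simp only [thetaM, ← Finset.sum_div, sum_fold]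
  exact div_self (rhoZm_pos hσ).ne'

end FoldedGaussian

lemma pow_sub_one_le_rpow_half_add_one_sq {x : ℝ} (hx : 0 ≤ x) (n : ℕ) :
    x ^ n - 1 ≤ (x ^ ((n : ℝ) / 2) + 1) ^ 2 := by
  have pow_eq : x ^ n = (x ^ ((n : ℝ) / 2)) ^ 2 := by
    rw [← Real.rpow_mul_natCast hx, Nat.cast_ofNat, div_mul_cancel₀ _ two_ne_zero,
      Real.rpow_natCast]
  linarith [Real.rpow_nonneg hx ((n : ℝ) / 2)]

theorem stmt_8_general (m q : ℕ) [NeZero q] {σ : ℝ} (hσ : σ ≠ 0) :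
    (∑ e : Fin m → ZMod q, ∑ e' : Fin m → ZMod q,
        if e ≠ e' then Real.sqrt (thetaM σ q m e) * Real.sqrt (thetaM σ q m e') else 0) ≤
      (q : ℝ) ^ m - 1 := by
  have off_diagonal_le := sum_sum_ite_ne_mul_le fun e : Fin m → ZMod q ↦ Real.sqrt (thetaM σ q m e)
  simpa only [Real.sq_sqrt (thetaM_nonneg _), sum_thetaM hσ, mul_one, Fintype.card_pi_const,
    ZMod.card, Nat.cast_pow] using off_diagonal_le

/-- For `m ≥ 1`, `q ≥ 2` and `2 ≤ σ ≤ q/√(8·m·ln q)`: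
`Σ_{e ≠ e' ∈ (ℤ/qℤ)^m} √(ϑ_{σ,q}(e))·√(ϑ_{σ,q}(e')) ≤ (q^{m/2} + 1)²`. -/
theorem stmt_8 (m q : ℕ) [NeZero q] (hm : 1 ≤ m) (hq : 2 ≤ q) (σ : ℝ)
    (hσ1 : 2 ≤ σ) (hσ2 : σ ≤ (q : ℝ) / Real.sqrt (8 * m * Real.log q)) :
    (∑ e : Fin m → ZMod q, ∑ e' : Fin m → ZMod q,
        if e ≠ e' then Real.sqrt (thetaM σ q m e) * Real.sqrt (thetaM σ q m e') else 0) ≤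
      ((q : ℝ) ^ ((m : ℝ) / 2) + 1) ^ 2 :=
  (stmt_8_general m q (by positivity)).trans
    (pow_sub_one_le_rpow_half_add_one_sq q.cast_nonneg m)
end

section
/- Let m ≥ 1 and q ≥ 2 be integers and σ ≥ 2 a real number with q ≥ 2σ√m. Then Σ_{e ∈ (ℤ/qℤ)^m} √(ϑ_{σ,q}(e)) ≤ (2√σ)^m + q^m · exp(−q²/(8σ²)). -/
/-!
The weight `ρ_σ(z) = exp (-π ‖z‖² / σ²)` satisfies `√(ρ_σ(z)) = ρ_{√2 σ}(z)`. Since `√` is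
subadditive and the residue classes modulo `q` partition `ℤ^m`, summing `√ϑ` over all classes
undoes the folding:

  `∑ₑ √(ϑ_{σ,q}(e)) ≤ ρ_{√2 σ}(ℤ^m) / √(ρ_σ(ℤ^m))`.

Poisson summation, `ρ_s(ℤ^m) = s^m ρ_{1/s}(ℤ^m)`, bounds the denominator below by `√σ ^ m`. For
`√2 σ ≥ 1` it also bounds the numerator above by `(√2 σ) ^ m * √2 ^ m = (2 σ) ^ m`, because
`ρ_s(ℤ) ≤ √2` when `s ≤ 1`. The quotient of the two bounds is already `(2 √σ) ^ m`.
-/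

open Real

section Summation

theorem sqrt_tsum_le_tsum_sqrt {α : Type*} {f : α → ℝ} (hf : ∀ a, 0 ≤ f a)
    (hs : Summable fun a ↦ √(f a)) : √(∑' a, f a) ≤ ∑' a, √(f a) := by
  set S := ∑' a, √(f a)
  have hS : 0 ≤ S := tsum_nonneg fun a ↦ sqrt_nonneg _
  have hle (a : α) : f a ≤ √(f a) * S :=
    calc f a = √(f a) * √(f a) := (mul_self_sqrt (hf a)).symm
      _ ≤ √(f a) * S := by gcongr; exact hs.le_tsum a fun b _ ↦ sqrt_nonneg _
  refine sqrt_le_iff.2 ⟨hS, ?_⟩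
  calc ∑' a, f a ≤ ∑' a, √(f a) * S :=
        (Summable.of_nonneg_of_le hf hle (hs.mul_right S)).tsum_le_tsum hle (hs.mul_right S)
    _ = S ^ 2 := by rw [tsum_mul_right, sq]

variable {R : Type*} [NormedCommRing R]

theorem summable_norm_prod_pi {n : ℕ} {β : Fin n → Type*} {f : ∀ i, β i → R}
    (hf : ∀ i, Summable fun b ↦ ‖f i b‖) :
    Summable fun k : ∀ i, β i ↦ ‖∏ i, f i (k i)‖ := by
  induction n with
  | zero => exact .of_finite
  | succ n ih =>
    rw [← (Fin.consEquiv β).summable_iff]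
    simpa [Function.comp_def, Fin.consEquiv, Fin.prod_univ_succ] using
      (hf 0).mul_norm (ih fun i ↦ hf i.succ)

theorem tsum_prod_pi_of_summable_norm [CompleteSpace R] {n : ℕ} {β : Fin n → Type*}
    {f : ∀ i, β i → R} (hf : ∀ i, Summable fun b ↦ ‖f i b‖) :
    ∑' k : ∀ i, β i, ∏ i, f i (k i) = ∏ i, ∑' b, f i b := by
  induction n with
  | zero => simp
  | succ n ih =>
    rw [← (Fin.consEquiv β).tsum_eq, Fin.prod_univ_succ, ← ih fun i ↦ hf i.succ,
      tsum_mul_tsum_of_summable_norm (hf 0) (summable_norm_prod_pi fun i ↦ hf i.succ)]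
    simp [Fin.consEquiv, Fin.prod_univ_succ]

end Summation

section Folding

/-- Division with remainder by `q` in `ℤ`, with the remainder taken in `(-q/2, q/2]` and recorded
as an element of `ZMod q`. -/
def zmodProdIntEquivInt (q : ℕ) [NeZero q] : ZMod q × ℤ ≃ ℤ where
  toFun p := p.1.valMinAbs + q * p.2
  invFun z := (z, (z - (z : ZMod q).valMinAbs) / q)
  left_inv p := by simp [NeZero.ne q]
  right_inv z := by
    have hdvd : (q : ℤ) ∣ z - (z : ZMod q).valMinAbs := by
      simp [← ZMod.intCast_zmod_eq_zero_iff_dvd]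
    simp [Int.mul_ediv_cancel' hdvd]

/-- Coordinatewise division by `q` with centered remainder, used to unfold a sum over residue
classes into a sum over integer vectors. -/
def zmodPiProdIntPiEquiv (ι : Type*) (q : ℕ) [NeZero q] :
    (ι → ZMod q) × (ι → ℤ) ≃ (ι → ℤ) :=
  (Equiv.arrowProdEquivProdArrow ι (fun _ ↦ ZMod q) fun _ ↦ ℤ).symm.trans
    (Equiv.piCongrRight fun _ ↦ zmodProdIntEquivInt q)

theorem sum_sqrt_tsum_valMinAbs_add_mul_le {ι : Type*} [Fintype ι] [DecidableEq ι] (q : ℕ)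
    [NeZero q] {f : (ι → ℤ) → ℝ} (hf : ∀ z, 0 ≤ f z) (hs : Summable fun z ↦ √(f z)) :
    ∑ e : ι → ZMod q, √(∑' k : ι → ℤ, f fun i ↦ (e i).valMinAbs + q * k i) ≤ ∑' z, √(f z) := by
  have hs' := (zmodPiProdIntPiEquiv ι q).summable_iff.2 hs
  calc ∑ e : ι → ZMod q, √(∑' k : ι → ℤ, f fun i ↦ (e i).valMinAbs + q * k i)
      ≤ ∑ e : ι → ZMod q, ∑' k : ι → ℤ, √(f fun i ↦ (e i).valMinAbs + q * k i) :=
        Finset.sum_le_sum fun e _ ↦ sqrt_tsum_le_tsum_sqrt (fun _ ↦ hf _) (hs'.prod_factor e)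
    _ = ∑' z, √(f z) := by
        rw [← (zmodPiProdIntPiEquiv ι q).tsum_eq, ← tsum_fintype (L := .unconditional _)]
        exact hs'.tsum_prod.symm

end Folding

section IntegerTheta

variable {σ : ℝ}

theorem hasSum_int_gaussian_jacobiTheta (hσ : σ ≠ 0) :
    HasSum (fun n : ℤ ↦ ((exp (-π * n ^ 2 / σ ^ 2) : ℝ) : ℂ))
      (jacobiTheta (((σ ^ 2)⁻¹ : ℝ) * Complex.I)) := by
  have him : 0 < ((((σ ^ 2)⁻¹ : ℝ) : ℂ) * Complex.I).im := by
    rw [Complex.mul_I_im, Complex.ofReal_re]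
    positivity
  rw [jacobiTheta_eq_jacobiTheta₂]
  convert hasSum_jacobiTheta₂_term 0 him using 2 with n
  rw [jacobiTheta₂_term, Complex.ofReal_exp]
  congr 1
  push_cast
  linear_combination (-π * n ^ 2 * ((σ : ℂ) ^ 2)⁻¹) * Complex.I_sq

theorem summable_int_gaussian (hσ : σ ≠ 0) :
    Summable fun n : ℤ ↦ exp (-π * n ^ 2 / σ ^ 2) :=
  Complex.summable_ofReal.1 (hasSum_int_gaussian_jacobiTheta hσ).summable

theorem tsum_int_gaussian_eq_mul_inv (hσ : 0 < σ) :
    ∑' n : ℤ, exp (-π * n ^ 2 / σ ^ 2) = σ * ∑' n : ℤ, exp (-π * n ^ 2 / σ⁻¹ ^ 2) := by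
  have poisson := Real.tsum_exp_neg_mul_int_sq (a := (σ ^ 2)⁻¹) (by positivity)
  rw [← sqrt_eq_rpow, sqrt_inv, sqrt_sq hσ.le, one_div, inv_inv] at poisson
  convert poisson using 4 <;> field_simp

theorem tsum_int_gaussian_le_sqrt_two (hσ : 0 < σ) (hσ1 : σ ≤ 1) :
    ∑' n : ℤ, exp (-π * n ^ 2 / σ ^ 2) ≤ √2 := by
  set r := exp (-π * (σ ^ 2)⁻¹)
  have hr : r ≤ 1 / 8 := by
    have hinv : 1 ≤ (σ ^ 2)⁻¹ := one_le_inv₀ (by positivity) |>.2 (pow_le_one₀ hσ.le hσ1)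
    have hexp : 8 ≤ exp π := by
      nlinarith [quadratic_le_exp_of_nonneg pi_pos.le, pi_gt_three]
    calc r ≤ exp (-π) := exp_le_exp.2 (by nlinarith [pi_pos])
      _ = 1 / exp π := by rw [exp_neg, one_div]
      _ ≤ 1 / 8 := by gcongr
  have htheta : |∑' n : ℤ, exp (-π * n ^ 2 / σ ^ 2) - 1| ≤ 2 / (1 - r) * r := by
    have := norm_jacobiTheta_sub_one_le (τ := ((σ ^ 2)⁻¹ : ℝ) * Complex.I)
      (by rw [Complex.mul_I_im, Complex.ofReal_re]; positivity)
    rw [← (hasSum_int_gaussian_jacobiTheta hσ.ne').tsum_eq, ← Complex.ofReal_tsum,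
      Complex.mul_I_im, Complex.ofReal_re] at this
    exact_mod_cast this
  have htail : 2 / (1 - r) * r ≤ 2 / 7 := by
    rw [div_mul_eq_mul_div, div_le_iff₀ (by linarith)]
    linarith
  have hsqrt : (9 / 7 : ℝ) ≤ √2 := le_sqrt_of_sq_le (by norm_num)
  linarith [le_abs_self (∑' n : ℤ, exp (-π * n ^ 2 / σ ^ 2) - 1)]

end IntegerTheta

section GaussianWeight

/-- The Gaussian weight `ρ_σ(z) = exp (-π ‖z‖² / σ²)` of an integer vector `z`, the summand of
`rhoZm` and, at `z = x̄ + q k`, of the numerator of `thetaM`. -/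
noncomputable def gaussianWeight {ι : Type*} [Fintype ι] (σ : ℝ) (z : ι → ℤ) : ℝ :=
  exp (-π * (∑ i, (z i : ℝ) ^ 2) / σ ^ 2)

theorem gaussianWeight_nonneg {ι : Type*} [Fintype ι] (σ : ℝ) (z : ι → ℤ) :
    0 ≤ gaussianWeight σ z :=
  (exp_pos _).le

theorem gaussianWeight_eq_prod {ι : Type*} [Fintype ι] (σ : ℝ) (z : ι → ℤ) :
    gaussianWeight σ z = ∏ i, exp (-π * (z i : ℝ) ^ 2 / σ ^ 2) := by
  rw [gaussianWeight, ← exp_sum, Finset.mul_sum, Finset.sum_div]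

theorem sqrt_gaussianWeight {ι : Type*} [Fintype ι] (σ : ℝ) (z : ι → ℤ) :
    √(gaussianWeight σ z) = gaussianWeight (√2 * σ) z := by
  rw [gaussianWeight, gaussianWeight, ← exp_half, mul_pow, sq_sqrt zero_le_two, div_div,
    mul_comm (σ ^ 2)]

variable {σ : ℝ} {m : ℕ}

theorem summable_gaussianWeight (hσ : σ ≠ 0) :
    Summable fun z : Fin m → ℤ ↦ gaussianWeight σ z := by
  simp_rw [gaussianWeight_eq_prod]
  exact (summable_norm_prod_pi fun _ ↦ (summable_int_gaussian hσ).norm).of_norm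

theorem rhoZm_eq_pow (hσ : σ ≠ 0) :
    rhoZm σ m = (∑' n : ℤ, exp (-π * n ^ 2 / σ ^ 2)) ^ m := by
  calc rhoZm σ m = ∑' z : Fin m → ℤ, ∏ i, exp (-π * (z i : ℝ) ^ 2 / σ ^ 2) :=
        tsum_congr (gaussianWeight_eq_prod σ)
    _ = (∑' n : ℤ, exp (-π * n ^ 2 / σ ^ 2)) ^ m := by
        rw [tsum_prod_pi_of_summable_norm fun _ ↦ (summable_int_gaussian hσ).norm,
          Finset.prod_const, Finset.card_univ, Fintype.card_fin]

theorem rhoZm_eq_pow_mul_rhoZm_inv (hσ : 0 < σ) : rhoZm σ m = σ ^ m * rhoZm σ⁻¹ m := by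
  rw [rhoZm_eq_pow hσ.ne', rhoZm_eq_pow (inv_ne_zero hσ.ne'), ← mul_pow,
    ← tsum_int_gaussian_eq_mul_inv hσ]

theorem one_le_rhoZm (hσ : σ ≠ 0) : 1 ≤ rhoZm σ m := by
  calc 1 = gaussianWeight σ (0 : Fin m → ℤ) := by simp [gaussianWeight]
    _ ≤ rhoZm σ m := (summable_gaussianWeight hσ).le_tsum 0 fun z _ ↦ gaussianWeight_nonneg σ z

theorem pow_le_rhoZm (hσ : 0 < σ) : σ ^ m ≤ rhoZm σ m := by
  rw [rhoZm_eq_pow_mul_rhoZm_inv hσ]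
  exact le_mul_of_one_le_right (by positivity) (one_le_rhoZm (inv_ne_zero hσ.ne'))

theorem rhoZm_le_pow_of_one_le (hσ : 1 ≤ σ) : rhoZm σ m ≤ (√2 * σ) ^ m := by
  have hσ0 : 0 < σ := by positivity
  rw [rhoZm_eq_pow_mul_rhoZm_inv hσ0, rhoZm_eq_pow (inv_ne_zero hσ0.ne'), ← mul_pow, mul_comm]
  gcongr
  exact tsum_int_gaussian_le_sqrt_two (inv_pos.2 hσ0) (inv_le_one_of_one_le₀ hσ)

theorem thetaM_eq_tsum_gaussianWeight (σ : ℝ) (q : ℕ) (x : Fin m → ZMod q) :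
    thetaM σ q m x =
      (∑' k : Fin m → ℤ, gaussianWeight σ fun i ↦ (x i).valMinAbs + q * k i) / rhoZm σ m := by
  simp [thetaM, gaussianWeight]

theorem sum_sqrt_thetaM_le_rhoZm_div (q : ℕ) [NeZero q] (hσ : σ ≠ 0) :
    ∑ e : Fin m → ZMod q, √(thetaM σ q m e) ≤ rhoZm (√2 * σ) m / √(rhoZm σ m) := by
  have hsummable : Summable fun z : Fin m → ℤ ↦ √(gaussianWeight σ z) := by
    simp_rw [sqrt_gaussianWeight]
    exact summable_gaussianWeight (by positivity)
  have hrho : 0 ≤ rhoZm σ m := zero_le_one.trans (one_le_rhoZm hσ)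
  simp_rw [thetaM_eq_tsum_gaussianWeight, sqrt_div' _ hrho]
  rw [← Finset.sum_div]
  gcongr
  calc ∑ e : Fin m → ZMod q, √(∑' k : Fin m → ℤ,
          gaussianWeight σ fun i ↦ (e i).valMinAbs + q * k i)
      ≤ ∑' z : Fin m → ℤ, √(gaussianWeight σ z) :=
        sum_sqrt_tsum_valMinAbs_add_mul_le q (gaussianWeight_nonneg σ) hsummable
    _ = rhoZm (√2 * σ) m := tsum_congr (sqrt_gaussianWeight σ)

end GaussianWeight

theorem stmt_19_general (m q : ℕ) [NeZero q] (σ : ℝ) (hσ : 1 ≤ √2 * σ) :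
    ∑ e : Fin m → ZMod q, √(thetaM σ q m e) ≤ (2 * √σ) ^ m := by
  have hσ0 : 0 < σ := pos_of_mul_pos_right (zero_lt_one.trans_le hσ) (sqrt_nonneg 2)
  have hden : √σ ^ m ≤ √(rhoZm σ m) := by
    apply le_sqrt_of_sq_le
    rw [pow_right_comm, sq_sqrt hσ0.le]
    exact pow_le_rhoZm hσ0
  calc ∑ e : Fin m → ZMod q, √(thetaM σ q m e)
      ≤ rhoZm (√2 * σ) m / √(rhoZm σ m) := sum_sqrt_thetaM_le_rhoZm_div q hσ0.ne'
    _ ≤ (√2 * (√2 * σ)) ^ m / √σ ^ m := by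
        gcongr
        exact rhoZm_le_pow_of_one_le hσ
    _ = (2 * √σ) ^ m := by
        rw [← mul_assoc, mul_self_sqrt zero_le_two, ← div_pow, mul_div_assoc, div_sqrt]

/-- For `m ≥ 1`, `q ≥ 2` and `σ ≥ 2` with `q ≥ 2σ√m`:
`Σ_{e ∈ (ℤ/qℤ)^m} √(ϑ_{σ,q}(e)) ≤ (2√σ)^m + q^m·exp(−q²/(8σ²))`. -/
theorem stmt_19 (m q : ℕ) [NeZero q] (hm : 1 ≤ m) (hq : 2 ≤ q) (σ : ℝ)
    (hσ : 2 ≤ σ) (hqs : 2 * σ * Real.sqrt m ≤ q) :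
    (∑ e : Fin m → ZMod q, Real.sqrt (thetaM σ q m e)) ≤
      (2 * Real.sqrt σ) ^ m + (q : ℝ) ^ m * Real.exp (-(q : ℝ) ^ 2 / (8 * σ ^ 2)) :=
  (stmt_19_general m q σ (one_le_mul_of_one_le_of_one_le (one_le_sqrt.2 one_le_two)
    (one_le_two.trans hσ))).trans (le_add_of_nonneg_right (by positivity))
end
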